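/- For every ε > 0 there exist a finite set S of points in the plane in convex position and in general position and a directed edge a→b of Θ₆(S) such that every path between a and b in ΘΘ₆(S) has length at least (4 − ε)·|ab|. Hence the constant 4 in the statement 'every Θ₆-edge of a convex-position point set is spanned in ΘΘ₆ by a path of length at most 4 times its length' cannot be replaced by any smaller constant. -/

import Mathlib

/-!
The extremal configuration is half of a regular hexagon. Let `v₁, v₂, v₃, v₄` be four consecutive
vertices of a regular hexagon with centre `v₀`, so that `v₀v₄` and all four segments `vⱼ₋₁vⱼ` have
the same length. After a generic perturbation of size `δ` that pushes `v₀` out of the hull of the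
other points, all earlier points `vᵢ`, `i < j`, lie in one and the same cone of `vⱼ`, and `vⱼ₋₁` is
strictly the closest of them. So the only edge of `Θ₆` from `vⱼ` to an earlier point goes to `vⱼ₋₁`,
and `vⱼ₋₁ → vⱼ` is the only edge from an earlier point that survives at `vⱼ` in `ΘΘ₆`. Hence `ΘΘ₆`
is contained in the path `v₀v₁v₂v₃v₄`, of length about `4 |v₀v₄|`, although `v₀ → v₄` is an edge
of `Θ₆`.

Points are written as `x + yω` with `ω = exp (iπ/3)`. The cones at the origin are then the sets of
`(x + yω) ωᵏ` with `x > 0` and `y ≥ 0`, and the projective distance of such a point from the origin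
is `√3 / 2 * (x + y)`.
-/

open Real

noncomputable section

/-- Counterclockwise angle in `[0, 2π)` from the positive x-axis to the direction of `z`. -/
def argIn (z : ℂ) : ℝ := if 0 ≤ Complex.arg z then Complex.arg z else Complex.arg z + 2 * π

/-- The half-open cone `C_i(u)` with apex `u`: points `p ≠ u` whose direction from `u` has
counterclockwise angle in `[(i-1)π/3, iπ/3)`. -/
def cone (i : ℕ) (u : ℂ) : Set ℂ :=
  {p | p ≠ u ∧ argIn (p - u) ∈ Set.Ico (((i : ℝ) - 1) * (π / 3)) ((i : ℝ) * (π / 3))}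

/-- The index `i ∈ {1, …, 6}` of the cone of `u` containing `v`. -/
def coneIdx (u v : ℂ) : ℕ := (⌊argIn (v - u) / (π / 3)⌋).toNat + 1

/-- The angle of the bisector ray of the cone of `u` containing `v`. -/
def bisAngle (u v : ℂ) : ℝ := ((coneIdx u v : ℝ) - 1) * (π / 3) + π / 6

/-- The projective distance from `u` to `v`: the Euclidean distance from `u` to the
orthogonal projection of `v` onto the bisector ray of the cone of `u` containing `v`. -/
def projDist (u v : ℂ) : ℝ :=
  ((v - u) * Complex.exp (-(Complex.I * (bisAngle u v : ℂ)))).re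

/-- `S` is in general position: no two points of `S` lie on a common line parallel to one of
the six rays from the origin at angles `jπ/3`. -/
def GenPos (S : Finset ℂ) : Prop :=
  ∀ u ∈ S, ∀ v ∈ S, u ≠ v → ∀ j : ℕ, argIn (v - u) ≠ (j : ℝ) * (π / 3)

/-- `S` is in convex position: every point of `S` is an extreme point of the convex hull. -/
def ConvexPos (S : Finset ℂ) : Prop :=
  ∀ p ∈ S, p ∈ Set.extremePoints ℝ (convexHull ℝ (S : Set ℂ))

/-- `u → v` is a directed edge of `Θ₆(S)`: `v` minimizes the projective distance from `u`
among the points of `S` in the cone of `u` containing `v`. -/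
def ThetaEdge (S : Finset ℂ) (u v : ℂ) : Prop :=
  u ∈ S ∧ v ∈ S ∧ v ≠ u ∧
    ∀ w ∈ S, w ∈ cone (coneIdx u v) u → projDist u v ≤ projDist u w

/-- `u → v` is a directed edge of `ΘΘ₆(S)`: it is an edge of `Θ₆(S)` and among all incoming
`Θ₆`-edges `w → v` with `w` in the same cone of `v` as `u`, it minimizes `‖wv‖`. -/
def ThetaThetaEdge (S : Finset ℂ) (u v : ℂ) : Prop :=
  ThetaEdge S u v ∧
    ∀ w, ThetaEdge S w v → coneIdx v w = coneIdx v u → projDist u v ≤ projDist w v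

/-- Undirected adjacency in `ΘΘ₆(S)`: paths may use edges in either direction. -/
def TTAdj (S : Finset ℂ) (u v : ℂ) : Prop := ThetaThetaEdge S u v ∨ ThetaThetaEdge S v u

/-- `p` is a path between `u` and `v` with respect to the adjacency relation `A`. -/
def IsPath (A : ℂ → ℂ → Prop) (u v : ℂ) (p : List ℂ) : Prop :=
  p.Chain' A ∧ p.head? = some u ∧ p.getLast? = some v

/-- The Euclidean length of the polygonal path through the points of `p`. -/
def pathLength (p : List ℂ) : ℝ := (List.zipWith dist p p.tail).sum

/-! ### Oblique coordinates in a cone -/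

/-- The primitive sixth root of unity `ω = exp (iπ/3)`; multiplication by it maps each cone at the
origin onto the next one. -/
def sixthRoot : ℂ := Complex.exp (((π / 3 : ℝ) : ℂ) * Complex.I)

/-- The point `x + yω`, whose coordinates refer to the two bounding rays of the first cone. -/
def hexPoint (x y : ℝ) : ℂ := x + y * sixthRoot

lemma sixthRoot_pow (k : ℕ) :
    sixthRoot ^ k = Complex.exp (((k * (π / 3) : ℝ) : ℂ) * Complex.I) := by
  rw [sixthRoot, ← Complex.exp_nat_mul]
  push_cast
  ring_nf

lemma sixthRoot_re : sixthRoot.re = 1 / 2 := by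
  rw [sixthRoot, Complex.exp_ofReal_mul_I_re, cos_pi_div_three]

lemma sixthRoot_im : sixthRoot.im = √3 / 2 := by
  rw [sixthRoot, Complex.exp_ofReal_mul_I_im, sin_pi_div_three]

lemma sixthRoot_pow_three : sixthRoot ^ 3 = -1 := by
  rw [sixthRoot_pow, ← Complex.exp_pi_mul_I]
  push_cast
  ring_nf

lemma sixthRoot_sq : sixthRoot ^ 2 = sixthRoot - 1 := by
  have h3 : √3 * √3 = 3 := mul_self_sqrt (by norm_num)
  apply Complex.ext
  · simp only [pow_two, Complex.mul_re, Complex.sub_re, Complex.one_re, sixthRoot_re, sixthRoot_im]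
    linear_combination -(1 / 4) * h3
  · simp only [pow_two, Complex.mul_im, Complex.sub_im, Complex.one_im, sixthRoot_re, sixthRoot_im]
    ring

lemma sixthRoot_pow_mod_six (k : ℕ) : sixthRoot ^ (k % 6) = sixthRoot ^ k := by
  have h6 : sixthRoot ^ 6 = 1 := by
    rw [show 6 = 3 * 2 from rfl, pow_mul, sixthRoot_pow_three]
    norm_num
  exact (pow_eq_pow_mod k h6).symm

lemma hexPoint_re (x y : ℝ) : (hexPoint x y).re = x + y / 2 := by
  simp [hexPoint, sixthRoot_re, div_eq_mul_inv]

lemma hexPoint_im (x y : ℝ) : (hexPoint x y).im = y * (√3 / 2) := by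
  simp [hexPoint, sixthRoot_im]

lemma hexPoint_sub (x y x' y' : ℝ) :
    hexPoint x y - hexPoint x' y' = hexPoint (x - x') (y - y') := by
  simp only [hexPoint, Complex.ofReal_sub]
  ring

lemma hexPoint_mul_sixthRoot (x y : ℝ) :
    hexPoint x y * sixthRoot = hexPoint (-y) (x + y) := by
  simp only [hexPoint, Complex.ofReal_neg, Complex.ofReal_add]
  linear_combination (y : ℂ) * sixthRoot_sq

lemma dist_hexPoint (x y x' y' : ℝ) :
    dist (hexPoint x y) (hexPoint x' y') =
      √((x - x') ^ 2 + (x - x') * (y - y') + (y - y') ^ 2) := by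
  have h3 : √3 * √3 = 3 := mul_self_sqrt (by norm_num)
  rw [Complex.dist_eq_re_im]
  simp only [hexPoint_re, hexPoint_im]
  congr 1
  linear_combination (1 / 4) * (y - y') ^ 2 * h3

/-- The linear functional `x + yω ↦ αx + βy`. -/
def hexFunctional (α β : ℝ) : ℂ →L[ℝ] ℝ :=
  α • (Complex.reCLM - (1 / √3) • Complex.imCLM) + β • (2 / √3) • Complex.imCLM

lemma hexFunctional_hexPoint (α β x y : ℝ) :
    hexFunctional α β (hexPoint x y) = α * x + β * y := by
  have h3 : √3 ≠ 0 := by positivity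
  simp only [hexFunctional, add_apply, smul_apply, sub_apply, Complex.reCLM_apply,
    Complex.imCLM_apply, smul_eq_mul, hexPoint_re, hexPoint_im]
  field_simp
  ring

lemma arg_hexPoint_mem_Ioo {x y : ℝ} (hx : 0 < x) (hy : 0 < y) :
    Complex.arg (hexPoint x y) ∈ Set.Ioo 0 (π / 3) := by
  have him : 0 < (hexPoint x y).im := by
    rw [hexPoint_im]
    positivity
  have hpos : 0 < Complex.arg (hexPoint x y) :=
    (Complex.arg_nonneg_iff.2 him.le).lt_of_ne' fun h => him.ne' (Complex.arg_eq_zero_iff.1 h).2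
  refine ⟨hpos, ?_⟩
  by_contra! hge
  have hsin : 0 ≤ sin (Complex.arg (hexPoint x y) - π / 3) :=
    sin_nonneg_of_nonneg_of_le_pi (by linarith)
      (by linarith [Complex.arg_le_pi (hexPoint x y), pi_pos])
  have hside : ‖hexPoint x y‖ * sin (Complex.arg (hexPoint x y) - π / 3) = -(√3 / 2 * x) := by
    have hre := Complex.norm_mul_cos_arg (hexPoint x y)
    have him := Complex.norm_mul_sin_arg (hexPoint x y)
    rw [hexPoint_re] at hre
    rw [hexPoint_im] at him
    rw [sin_sub, cos_pi_div_three, sin_pi_div_three]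
    linear_combination (1 / 2) * him - (√3 / 2) * hre
  have : 0 < √3 / 2 * x := by positivity
  linarith [mul_nonneg (norm_nonneg (hexPoint x y)) hsin]

/-! ### Cones -/

lemma argIn_nonneg (z : ℂ) : 0 ≤ argIn z := by
  unfold argIn
  split_ifs with h
  · exact h
  · linarith [Complex.neg_pi_lt_arg z, pi_pos]

lemma argIn_mul_exp {r θ : ℝ} (hr : 0 < r) (hθ : θ ∈ Set.Ico 0 (2 * π)) :
    argIn (r * Complex.exp (θ * Complex.I)) = θ := by
  rw [argIn, Complex.arg_real_mul _ hr]
  rcases le_or_gt θ π with h | h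
  · have harg : Complex.arg (Complex.exp (θ * Complex.I)) = θ := by
      rw [Complex.arg_exp_mul_I, toIocMod_eq_self]
      exact ⟨by linarith [hθ.1, pi_pos], by linarith⟩
    rw [harg, if_pos hθ.1]
  · have harg : Complex.arg (Complex.exp (θ * Complex.I)) = θ - 2 * π := by
      rw [Complex.arg_exp_mul_I, ← toIocMod_sub, toIocMod_eq_self]
      exact ⟨by linarith, by linarith [hθ.2, pi_pos]⟩
    rw [harg, if_neg (by linarith [hθ.2]), sub_add_cancel]

lemma coneIdx_eq_succ_iff {u v : ℂ} {k : ℕ} :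
    coneIdx u v = k + 1 ↔ argIn (v - u) ∈ Set.Ico (k * (π / 3)) ((k + 1) * (π / 3)) := by
  have hpi : 0 < π / 3 := by positivity
  have hfloor : 0 ≤ ⌊argIn (v - u) / (π / 3)⌋ :=
    Int.floor_nonneg.2 (div_nonneg (argIn_nonneg _) hpi.le)
  rw [coneIdx, Nat.add_right_cancel_iff, ← Int.natCast_inj, Int.toNat_of_nonneg hfloor,
    Int.floor_eq_iff, le_div_iff₀ hpi, div_lt_iff₀ hpi, Int.cast_natCast, Set.mem_Ico]

lemma mem_cone_coneIdx_iff {u v w : ℂ} :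
    w ∈ cone (coneIdx u v) u ↔ w ≠ u ∧ coneIdx u w = coneIdx u v := by
  obtain ⟨k, hk⟩ : ∃ k, coneIdx u v = k + 1 := ⟨_, rfl⟩
  rw [hk, coneIdx_eq_succ_iff, cone, Set.mem_ofPred_eq]
  push_cast
  rw [add_sub_cancel_right]

/-- `v` lies strictly inside the cone of `u` spanned by the directions `ωᵏ` and `ωᵏ⁺¹`, which is
`C_i(u)` for `i = k % 6 + 1`, and has coordinates `x` and `y` along these directions. Allowing any
`k : ℕ` makes the opposite cone `k + 3`. -/
structure ConeCoord (u v : ℂ) (k : ℕ) (x y : ℝ) : Prop where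
  pos_left : 0 < x
  pos_right : 0 < y
  sub_eq : v - u = hexPoint x y * sixthRoot ^ k

namespace ConeCoord

variable {u v : ℂ} {k : ℕ} {x y : ℝ}

lemma symm (h : ConeCoord u v k x y) : ConeCoord v u (k + 3) x y where
  pos_left := h.pos_left
  pos_right := h.pos_right
  sub_eq := by rw [← neg_sub, h.sub_eq, pow_add, sixthRoot_pow_three]; ring

lemma argIn_mem_Ioo (h : ConeCoord u v k x y) :
    argIn (v - u) ∈ Set.Ioo ((k % 6 : ℕ) * (π / 3)) (((k % 6 : ℕ) + 1) * (π / 3)) := by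
  obtain ⟨harg_pos, harg_lt⟩ := arg_hexPoint_mem_Ioo h.pos_left h.pos_right
  set φ := Complex.arg (hexPoint x y) with hφ
  have hnorm : 0 < ‖hexPoint x y‖ := norm_pos_iff.2 fun hz => by
    rw [hφ, hz, Complex.arg_zero] at harg_pos
    exact harg_pos.false
  have hk : ((k % 6 : ℕ) : ℝ) ≤ 5 := by exact_mod_cast Nat.lt_succ_iff.1 (k.mod_lt (by norm_num))
  have hpolar : v - u = ‖hexPoint x y‖ *
      Complex.exp (((φ + (k % 6 : ℕ) * (π / 3) : ℝ) : ℂ) * Complex.I) := by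
    rw [h.sub_eq, ← sixthRoot_pow_mod_six, sixthRoot_pow, Complex.ofReal_add, add_mul,
      Complex.exp_add, ← mul_assoc, Complex.norm_mul_exp_arg_mul_I]
  rw [hpolar, argIn_mul_exp hnorm ⟨by positivity, by nlinarith⟩]
  constructor <;> linarith

lemma coneIdx_eq (h : ConeCoord u v k x y) : coneIdx u v = k % 6 + 1 :=
  coneIdx_eq_succ_iff.2 (Set.Ioo_subset_Ico_self h.argIn_mem_Ioo)

lemma projDist_eq (h : ConeCoord u v k x y) : projDist u v = √3 / 2 * (x + y) := by
  have hrot : (v - u) * Complex.exp (-(Complex.I * (bisAngle u v : ℂ))) =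
      hexPoint x y * Complex.exp (((-(π / 6) : ℝ) : ℂ) * Complex.I) := by
    rw [h.sub_eq, ← sixthRoot_pow_mod_six, sixthRoot_pow, bisAngle, h.coneIdx_eq, mul_assoc,
      ← Complex.exp_add]
    push_cast
    ring_nf
  rw [projDist, hrot, Complex.mul_re, Complex.exp_ofReal_mul_I_re, Complex.exp_ofReal_mul_I_im,
    cos_neg, sin_neg, cos_pi_div_six, sin_pi_div_six, hexPoint_re, hexPoint_im]
  ring

lemma argIn_ne (h : ConeCoord u v k x y) (j : ℕ) : argIn (v - u) ≠ j * (π / 3) := fun hj => by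
  have hpi : 0 < π / 3 := by positivity
  obtain ⟨hlt, hgt⟩ := h.argIn_mem_Ioo
  rw [hj, mul_lt_mul_iff_left₀ hpi] at hlt hgt
  norm_cast at hlt hgt
  lia

lemma ne (h : ConeCoord u v k x y) : v ≠ u := fun huv => by
  have := h.argIn_ne 0
  simp [huv, argIn] at this

end ConeCoord

/-! ### Edges of `Θ₆` and `ΘΘ₆` -/

lemma thetaEdge_of_coneIdx_ne {S : Finset ℂ} {u v : ℂ} (hu : u ∈ S) (hv : v ∈ S) (hvu : v ≠ u)
    (hS : ∀ w ∈ S, w ≠ u → w ≠ v → coneIdx u w ≠ coneIdx u v) : ThetaEdge S u v := by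
  refine ⟨hu, hv, hvu, fun w hw hcone => ?_⟩
  obtain ⟨hwu, hidx⟩ := mem_cone_coneIdx_iff.1 hcone
  obtain rfl : w = v := by_contra fun hwv => hS w hw hwu hwv hidx
  exact le_rfl

lemma not_ttAdj_of_closer {S : Finset ℂ} {u v w : ℂ} {k : ℕ} {x y x' y' : ℝ}
    (huv : ConeCoord u v k x y) (hwv : ConeCoord w v k x' y') (hlt : x' + y' < x + y)
    (hedge : ThetaEdge S w v) : ¬ TTAdj S u v := by
  have hidx : coneIdx v w = coneIdx v u := by rw [huv.symm.coneIdx_eq, hwv.symm.coneIdx_eq]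
  have hproj : √3 / 2 * (x' + y') < √3 / 2 * (x + y) := by gcongr
  rintro (⟨-, hmin⟩ | ⟨⟨-, -, -, hmin⟩, -⟩)
  · refine (hmin w hedge hidx).not_gt ?_
    rwa [huv.projDist_eq, hwv.projDist_eq]
  · refine (hmin w hedge.1 (mem_cone_coneIdx_iff.2 ⟨hwv.symm.ne, hidx⟩)).not_gt ?_
    rwa [huv.symm.projDist_eq, hwv.symm.projDist_eq]

lemma TTAdj.mem_left {S : Finset ℂ} {u v : ℂ} (h : TTAdj S u v) : u ∈ S :=
  h.elim (fun h => h.1.1) (fun h => h.1.2.1)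

lemma TTAdj.mem_right {S : Finset ℂ} {u v : ℂ} (h : TTAdj S u v) : v ∈ S :=
  h.elim (fun h => h.1.2.1) (fun h => h.1.1)

/-! ### Path lengths and extreme points -/

lemma sub_le_pathLength {A : ℂ → ℂ → Prop} {f : ℂ → ℝ}
    (hf : ∀ u v, A u v → f v - f u ≤ dist u v) {u v : ℂ} {p : List ℂ} (hp : IsPath A u v p) :
    f v - f u ≤ pathLength p := by
  induction p generalizing u with
  | nil => simp [IsPath] at hp
  | cons x t ih =>
    obtain ⟨hchain, hhead, hlast⟩ := hp
    obtain rfl : x = u := by simpa using hhead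
    cases t with
    | nil =>
      obtain rfl : x = v := by simpa using hlast
      simp [pathLength]
    | cons y t =>
      obtain ⟨hxy, htail⟩ := List.isChain_cons_cons.1 hchain
      have hrest : f v - f y ≤ pathLength (y :: t) := ih ⟨htail, rfl, by simpa using hlast⟩
      have hlen : pathLength (x :: y :: t) = dist x y + pathLength (y :: t) := by
        simp [pathLength]
      linarith [hf x y hxy]

lemma natCast_mul_le_pathLength {n : ℕ} {P : Fin (n + 1) → ℂ} (hP : Function.Injective P)
    {A : ℂ → ℂ → Prop} (hA : ∀ u v, A u v → ∃ i j, P i = u ∧ P j = v ∧ (j : ℕ) ≤ i + 1)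
    {s : ℝ} (hs : 0 ≤ s) (hdist : ∀ i : Fin n, s ≤ dist (P i.castSucc) (P i.succ))
    {p : List ℂ} (hp : IsPath A (P 0) (P (Fin.last n)) p) : n * s ≤ pathLength p := by
  set f : ℂ → ℝ := Function.extend P (fun i => i * s) 0
  have hfP : ∀ i, f (P i) = i * s := fun i => hP.extend_apply _ _ i
  have hstep : ∀ u v, A u v → f v - f u ≤ dist u v := by
    intro u v huv
    obtain ⟨i, j, rfl, rfl, hij⟩ := hA u v huv
    rw [hfP, hfP, ← sub_mul]
    rcases Nat.le_succ_iff.1 hij with hji | hji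
    · have : (j : ℝ) ≤ i := by exact_mod_cast hji
      exact (mul_nonpos_of_nonpos_of_nonneg (by linarith) hs).trans dist_nonneg
    · obtain ⟨m, rfl, rfl⟩ : ∃ m : Fin n, m.castSucc = i ∧ m.succ = j :=
        ⟨⟨i, by lia⟩, rfl, Fin.ext hji.symm⟩
      simpa using hdist m
  simpa [hfP] using sub_le_pathLength hstep hp

-- The face of the hull on which `l` is maximal has an extreme point; it lies in `s`, so it is `p`.
lemma mem_extremePoints_convexHull_of_forall_lt {E : Type*} [AddCommGroup E] [Module ℝ E]
    [TopologicalSpace E] [T2Space E] [IsTopologicalAddGroup E] [ContinuousSMul ℝ E]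
    [LocallyConvexSpace ℝ E] {s : Set E} (hs : s.Finite) {p : E} (hp : p ∈ s) (l : E →L[ℝ] ℝ)
    (hl : ∀ q ∈ s, q ≠ p → l q < l p) : p ∈ (convexHull ℝ s).extremePoints ℝ := by
  have hcompact : IsCompact (convexHull ℝ s) := hs.isCompact_convexHull ℝ
  have hexposed : IsExposed ℝ (convexHull ℝ s) (l.toExposed (convexHull ℝ s)) :=
    ContinuousLinearMap.toExposed.isExposed
  have hface : (l.toExposed (convexHull ℝ s)).Nonempty := by
    obtain ⟨q, hq, hmax⟩ := hcompact.exists_isMaxOn ⟨p, subset_convexHull ℝ s hp⟩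
      l.continuous.continuousOn
    exact ⟨q, hq, hmax⟩
  obtain ⟨q, hq⟩ := (hexposed.isCompact hcompact).extremePoints_nonempty hface
  have hqhull : q ∈ (convexHull ℝ s).extremePoints ℝ :=
    hexposed.isExtreme.extremePoints_subset_extremePoints hq
  obtain rfl : q = p := by
    by_contra hqp
    exact (hl q (extremePoints_convexHull_subset hqhull) hqp).not_ge
      (hq.1.2 p (subset_convexHull ℝ s hp))
  exact hqhull

/-! ### The perturbed half hexagon -/

/-- The perturbed half hexagon, with perturbation parameter `δ`: vertex `0` is the centre and the
vertices `1, 2, 3, 4` are perturbations of `ω², ω, 1, ω⁻¹`. -/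
def halfHexagon (δ : ℝ) (i : Fin 5) : ℂ :=
  hexPoint (![0, -1 + 4 * δ, δ, 1 + 3 * δ, 1 + 4 * δ] i) (![0, 1 - δ, 1, -δ, -1 - 5 * δ] i)

/-- The vertex set of the perturbed half hexagon. -/
def halfHexagonVertices (δ : ℝ) : Finset ℂ := Finset.univ.image (halfHexagon δ)

/-- The coordinates, in the sense of `ConeCoord`, of vertex `j` of the perturbed half hexagon in
the cone of vertex `i` that contains it, for `i < j`; the other entries are placeholders. -/
def halfHexagonCoord (δ : ℝ) : Matrix (Fin 5) (Fin 5) (ℝ × ℝ) :=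
  !![0, (3 * δ, 1 - 4 * δ), (δ, 1), (δ, 1 + 2 * δ), (δ, 1 + 4 * δ);
     0, 0, (1 - 3 * δ, δ), (1, 1 - δ), (4 * δ, 2);
     0, 0, 0, (1 + δ, δ), (1 + 2 * δ, 1 + 3 * δ);
     0, 0, 0, 0, (1 + 3 * δ, δ);
     0, 0, 0, 0, 0]

section HalfHexagon

variable {δ : ℝ} {i j : Fin 5}

lemma halfHexagon_mem_vertices (i : Fin 5) : halfHexagon δ i ∈ halfHexagonVertices δ :=
  Finset.mem_image_of_mem _ (Finset.mem_univ i)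

lemma exists_eq_halfHexagon {u : ℂ} (hu : u ∈ halfHexagonVertices δ) :
    ∃ i, halfHexagon δ i = u := by
  simpa [halfHexagonVertices] using hu

lemma halfHexagonCoord_pos (hδ : 0 < δ) (hδ' : δ < 1 / 4) (hij : i < j) :
    0 < (halfHexagonCoord δ i j).1 ∧ 0 < (halfHexagonCoord δ i j).2 := by
  fin_cases i <;> fin_cases j <;> first
    | exact absurd hij (by decide)
    | simp only [halfHexagonCoord, Matrix.of_apply, Fin.zero_eta, Fin.mk_one, Fin.reduceFinMk,
        Matrix.cons_val]
      constructor <;> linarith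

lemma halfHexagonCoord_sum_lt (hδ : 0 < δ) (hδ' : δ < 1 / 4) {m : Fin 4} (him : i < m.castSucc) :
    (halfHexagonCoord δ m.castSucc m.succ).1 + (halfHexagonCoord δ m.castSucc m.succ).2 <
      (halfHexagonCoord δ i m.succ).1 + (halfHexagonCoord δ i m.succ).2 := by
  fin_cases i <;> fin_cases m <;> first
    | exact absurd him (by decide)
    | simp only [halfHexagonCoord, Matrix.of_apply, Fin.zero_eta, Fin.mk_one, Fin.reduceFinMk,
        Fin.reduceCastSucc, Fin.reduceSucc, Matrix.cons_val]
      linarith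

lemma halfHexagon_sub_eq (hij : i < j) : halfHexagon δ j - halfHexagon δ i =
    hexPoint (halfHexagonCoord δ i j).1 (halfHexagonCoord δ i j).2 * sixthRoot ^ (8 - (j : ℕ)) := by
  rw [halfHexagon, halfHexagon, hexPoint_sub]
  fin_cases i <;> fin_cases j <;> first
    | exact absurd hij (by decide)
    | simp only [halfHexagonCoord, Matrix.of_apply, Fin.zero_eta, Fin.mk_one, Fin.reduceFinMk,
        Matrix.cons_val, Nat.reduceSub, pow_succ, pow_zero, one_mul, ← mul_assoc,
        hexPoint_mul_sixthRoot]
      congr 1 <;> ring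

lemma coneCoord_halfHexagon (hδ : 0 < δ) (hδ' : δ < 1 / 4) (hij : i < j) :
    ConeCoord (halfHexagon δ i) (halfHexagon δ j) (8 - j)
      (halfHexagonCoord δ i j).1 (halfHexagonCoord δ i j).2 where
  pos_left := (halfHexagonCoord_pos hδ hδ' hij).1
  pos_right := (halfHexagonCoord_pos hδ hδ' hij).2
  sub_eq := halfHexagon_sub_eq hij

lemma coneIdx_halfHexagon_of_lt (hδ : 0 < δ) (hδ' : δ < 1 / 4) (hij : i < j) :
    coneIdx (halfHexagon δ i) (halfHexagon δ j) = (8 - j) % 6 + 1 :=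
  (coneCoord_halfHexagon hδ hδ' hij).coneIdx_eq

lemma coneIdx_halfHexagon_of_gt (hδ : 0 < δ) (hδ' : δ < 1 / 4) (hji : j < i) :
    coneIdx (halfHexagon δ i) (halfHexagon δ j) = (11 - i) % 6 + 1 := by
  rw [(coneCoord_halfHexagon hδ hδ' hji).symm.coneIdx_eq]
  lia

lemma halfHexagon_injective (hδ : 0 < δ) (hδ' : δ < 1 / 4) :
    Function.Injective (halfHexagon δ) :=
  Function.injective_iff_pairwise_ne.2 fun _ _ hij => hij.lt_or_gt.elim
    (fun h => (coneCoord_halfHexagon hδ hδ' h).ne.symm)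
    (fun h => (coneCoord_halfHexagon hδ hδ' h).ne)

lemma genPos_halfHexagonVertices (hδ : 0 < δ) (hδ' : δ < 1 / 4) :
    GenPos (halfHexagonVertices δ) := by
  intro u hu v hv huv
  obtain ⟨i, rfl⟩ := exists_eq_halfHexagon hu
  obtain ⟨j, rfl⟩ := exists_eq_halfHexagon hv
  rcases (ne_of_apply_ne _ huv).lt_or_gt with hij | hji
  · exact (coneCoord_halfHexagon hδ hδ' hij).argIn_ne
  · exact (coneCoord_halfHexagon hδ hδ' hji).symm.argIn_ne

-- The normal at the centre has to tilt with `δ` to separate it from both vertices `1` and `4`.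
lemma exists_hexFunctional_halfHexagon_lt (hδ : 0 < δ) (hδ' : δ < 1 / 4) (i : Fin 5) :
    ∃ α β, ∀ j ≠ i,
      hexFunctional α β (halfHexagon δ j) < hexFunctional α β (halfHexagon δ i) := by
  refine ⟨![-(1 + 2 * δ), -1, 0, 1, 1] i, ![-1, 0, 1, 1, 0] i, fun j hj => ?_⟩
  rw [halfHexagon, halfHexagon, hexFunctional_hexPoint, hexFunctional_hexPoint]
  fin_cases i <;> fin_cases j <;> first
    | exact absurd rfl hj
    | simp only [Fin.zero_eta, Fin.mk_one, Fin.reduceFinMk, Matrix.cons_val]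
      nlinarith

lemma convexPos_halfHexagonVertices (hδ : 0 < δ) (hδ' : δ < 1 / 4) :
    ConvexPos (halfHexagonVertices δ) := by
  intro p hp
  obtain ⟨i, rfl⟩ := exists_eq_halfHexagon hp
  obtain ⟨α, β, hlt⟩ := exists_hexFunctional_halfHexagon_lt hδ hδ' i
  refine mem_extremePoints_convexHull_of_forall_lt (Finset.finite_toSet _) hp
    (hexFunctional α β) fun q hq hqi => ?_
  obtain ⟨j, rfl⟩ := exists_eq_halfHexagon hq
  exact hlt j (ne_of_apply_ne _ hqi)

-- From vertex `i`, the later vertices lie in distinct cones, and the earlier ones all lie in the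
-- cone of vertex `i + 3`, whence the exception.
lemma thetaEdge_halfHexagon (hδ : 0 < δ) (hδ' : δ < 1 / 4) (hij : i < j)
    (h : i = 0 ∨ (j : ℕ) ≠ i + 3) :
    ThetaEdge (halfHexagonVertices δ) (halfHexagon δ i) (halfHexagon δ j) := by
  refine thetaEdge_of_coneIdx_ne (halfHexagon_mem_vertices i) (halfHexagon_mem_vertices j)
    (coneCoord_halfHexagon hδ hδ' hij).ne fun w hw hwi hwj => ?_
  obtain ⟨m, rfl⟩ := exists_eq_halfHexagon hw
  have hmj : m ≠ j := ne_of_apply_ne _ hwj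
  rw [coneIdx_halfHexagon_of_lt hδ hδ' hij]
  rcases (ne_of_apply_ne _ hwi : m ≠ i).lt_or_gt with hmi | him
  · rw [coneIdx_halfHexagon_of_gt hδ hδ' hmi]
    lia
  · rw [coneIdx_halfHexagon_of_lt hδ hδ' him]
    lia

lemma not_ttAdj_halfHexagon (hδ : 0 < δ) (hδ' : δ < 1 / 4) (hij : (i : ℕ) + 1 < j) :
    ¬ TTAdj (halfHexagonVertices δ) (halfHexagon δ i) (halfHexagon δ j) := by
  obtain ⟨m, rfl⟩ : ∃ m : Fin 4, m.succ = j := Fin.exists_succ_eq.2 (by lia)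
  have him : i < m.castSucc := by simpa [Fin.lt_def] using hij
  have hedge := thetaEdge_halfHexagon hδ hδ' m.castSucc_lt_succ (.inr (by simp))
  exact not_ttAdj_of_closer (coneCoord_halfHexagon hδ hδ' (him.trans m.castSucc_lt_succ))
    (coneCoord_halfHexagon hδ hδ' m.castSucc_lt_succ) (halfHexagonCoord_sum_lt hδ hδ' him) hedge

lemma dist_halfHexagon_zero_four_le (hδ : 0 < δ) :
    dist (halfHexagon δ 0) (halfHexagon δ 4) ≤ 1 + 5 * δ := by
  rw [halfHexagon, halfHexagon, dist_hexPoint, sqrt_le_left (by positivity)]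
  simp only [Matrix.cons_val]
  nlinarith

lemma le_dist_halfHexagon_succ (hδ : 0 < δ) (hδ' : δ < 1 / 4) (m : Fin 4) :
    1 - 3 * δ ≤ dist (halfHexagon δ m.castSucc) (halfHexagon δ m.succ) := by
  rw [halfHexagon, halfHexagon, dist_hexPoint]
  apply le_sqrt_of_sq_le
  fin_cases m <;>
    simp only [Fin.zero_eta, Fin.mk_one, Fin.reduceFinMk, Fin.reduceCastSucc, Fin.reduceSucc,
      Matrix.cons_val] <;>
    nlinarith

lemma le_pathLength_halfHexagon (hδ : 0 < δ) (hδ' : δ < 1 / 4) {p : List ℂ}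
    (hp : IsPath (TTAdj (halfHexagonVertices δ)) (halfHexagon δ 0) (halfHexagon δ 4) p) :
    4 * (1 - 3 * δ) ≤ pathLength p := by
  refine natCast_mul_le_pathLength (n := 4) (halfHexagon_injective hδ hδ') (fun u v huv => ?_)
    (by linarith) (le_dist_halfHexagon_succ hδ hδ') hp
  obtain ⟨i, rfl⟩ := exists_eq_halfHexagon huv.mem_left
  obtain ⟨j, rfl⟩ := exists_eq_halfHexagon huv.mem_right
  exact ⟨i, j, rfl, rfl, not_lt.1 fun hij => not_ttAdj_halfHexagon hδ hδ' hij huv⟩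

end HalfHexagon

lemma exists_thetaEdge_forall_le_pathLength {ε : ℝ} (hε : 0 < ε) :
    ∃ S : Finset ℂ, ConvexPos S ∧ GenPos S ∧ ∃ a b : ℂ, ThetaEdge S a b ∧
      ∀ p : List ℂ, IsPath (TTAdj S) a b p → (4 - ε) * dist a b ≤ pathLength p := by
  obtain ⟨δ, hδ, hδ8, hδε⟩ : ∃ δ : ℝ, 0 < δ ∧ δ ≤ 1 / 8 ∧ 32 * δ ≤ ε :=
    ⟨min (1 / 8) (ε / 32), by positivity, min_le_left _ _,
      by linarith [min_le_right (1 / 8) (ε / 32)]⟩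
  have hδ' : δ < 1 / 4 := by linarith
  refine ⟨halfHexagonVertices δ, convexPos_halfHexagonVertices hδ hδ',
    genPos_halfHexagonVertices hδ hδ', halfHexagon δ 0, halfHexagon δ 4,
    thetaEdge_halfHexagon hδ hδ' (by decide) (.inl rfl), fun p hp => ?_⟩
  set D := dist (halfHexagon δ 0) (halfHexagon δ 4)
  have hD : D ≤ 1 + 5 * δ := dist_halfHexagon_zero_four_le hδ
  calc (4 - ε) * D ≤ (4 - 32 * δ) * D := by gcongr
    _ ≤ (4 - 32 * δ) * (1 + 5 * δ) := by gcongr; linarith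
    _ ≤ 4 * (1 - 3 * δ) := by nlinarith
    _ ≤ pathLength p := le_pathLength_halfHexagon hδ hδ' hp

/-- For every `ε > 0` there is a finite set `S` in convex and general
position and a `Θ₆(S)`-edge `a → b` such that every path between `a` and `b` in `ΘΘ₆(S)` has
length at least `(4 - ε)·|ab|`; hence the constant `4` in Statement 1 is optimal. -/
theorem thetaTheta6_edge_bound_four_tight :
    (∀ ε : ℝ, 0 < ε → ∃ S : Finset ℂ, ConvexPos S ∧ GenPos S ∧
      ∃ a b : ℂ, ThetaEdge S a b ∧
        ∀ p : List ℂ, IsPath (TTAdj S) a b p → (4 - ε) * dist a b ≤ pathLength p) ∧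
    (∀ t : ℝ, t < 4 →
      ¬ ∀ S : Finset ℂ, ConvexPos S → GenPos S → ∀ a b : ℂ, ThetaEdge S a b →
          ∃ p : List ℂ, IsPath (TTAdj S) a b p ∧ pathLength p ≤ t * dist a b) := by
  refine ⟨fun _ => exists_thetaEdge_forall_le_pathLength, fun t ht hspan => ?_⟩
  obtain ⟨S, hconv, hgen, a, b, hab, hlong⟩ :=
    exists_thetaEdge_forall_le_pathLength (half_pos (sub_pos.2 ht))
  obtain ⟨p, hp, hshort⟩ := hspan S hconv hgen a b hab
  have hpos : 0 < dist a b := dist_pos.2 hab.2.2.1.symm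
  have hle : (4 - (4 - t) / 2) * dist a b ≤ t * dist a b := (hlong p hp).trans hshort
  linarith [le_of_mul_le_mul_right hle hpos]

end
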